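/- arXiv:1903.03897 — 2 statements merged into one kernel-verified Lean document; each statement's English description precedes it below -/
import Mathlib

section
/- The function F(x) = arcsl(x)/(x·Φ(x⁴, 3/2, 1/4)) is strictly increasing on the open interval (0, 1). -/
/-- The arc lemniscate sine function: `arcsl x = ∫₀ˣ dt / √(1 - t⁴)`. -/
noncomputable def arcsl (x : ℝ) : ℝ := ∫ t in (0:ℝ)..x, 1 / Real.sqrt (1 - t ^ 4)

/-- The Lerch zeta function: `Φ(z, s, a) = ∑ₖ zᵏ / (k + a)ˢ`. -/
noncomputable def lerchPhi (z s a : ℝ) : ℝ := ∑' k : ℕ, z ^ k / ((k : ℝ) + a) ^ s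

lemma hasSum_congr_aux {f g : ℕ → ℝ} {a : ℝ} (h : HasSum g a) (hfg : ∀ n, f n = g n) :
    HasSum f a := by
  rwa [funext hfg]

/-- The Taylor coefficients of `1 / √(1 - u)`. -/
noncomputable def cf (n : ℕ) : ℝ := Ring.multichoose (1 / 2 : ℝ) n

lemma cf_zero : cf 0 = 1 := by simp [cf]

lemma cf_succ (n : ℕ) : cf (n + 1) * (n + 1) = cf n * (n + 1 / 2) := by
  have h1 := Ring.factorial_nsmul_multichoose_eq_ascPochhammer (1 / 2 : ℝ) n
  have h2 := Ring.factorial_nsmul_multichoose_eq_ascPochhammer (1 / 2 : ℝ) (n + 1)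
  rw [ascPochhammer_succ_right, Polynomial.smeval_mul, ← h1] at h2
  simp only [nsmul_eq_mul, Nat.factorial_succ, Polynomial.smeval_add, Polynomial.smeval_X,
    Polynomial.smeval_natCast] at h2
  push_cast at h2
  have h3 : ((n.factorial : ℕ) : ℝ) ≠ 0 := by positivity
  apply mul_left_cancel₀ h3
  simp only [cf]
  simp only [pow_one, pow_zero, mul_one] at h2
  linarith

lemma cf_pos (n : ℕ) : 0 < cf n := by
  induction n with
  | zero => simp [cf_zero]
  | succ n ih =>
    have h := cf_succ n
    have : 0 < cf n * ((n : ℝ) + 1 / 2) := by positivity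
    rw [← h] at this
    exact pos_of_mul_pos_left this (by positivity)

lemma cf_hasSum {u : ℝ} (h0 : 0 ≤ u) (h1 : u < 1) :
    HasSum (fun n => cf n * u ^ n) (1 / Real.sqrt (1 - u)) := by
  have h := (Real.one_div_one_sub_rpow_hasFPowerSeriesOnBall_zero (1 / 2)).hasSum
    (y := u) (by
      rw [← ENNReal.ofReal_one, Metric.eball_ofReal]
      simp [abs_of_nonneg h0, h1])
  rw [Real.sqrt_eq_rpow]
  simp only [zero_add] at h
  refine hasSum_congr_aux h fun n => ?_
  simp [cf, Ring.multichoose_eq, FormalMultilinearSeries.ofScalars, mul_comm]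

lemma arcsl_hasSum {x : ℝ} (h0 : 0 < x) (h1 : x < 1) :
    HasSum (fun n : ℕ => cf n / (4 * n + 1) * (x ^ 4) ^ n) (arcsl x / x) := by
  have hx4 : x ^ 4 < 1 := pow_lt_one₀ h0.le h1 (by norm_num)
  have key : HasSum (fun n : ℕ => ∫ t in (0:ℝ)..x, cf n * (t ^ 4) ^ n)
      (∫ t in (0:ℝ)..x, 1 / Real.sqrt (1 - t ^ 4)) := by
    apply intervalIntegral.hasSum_integral_of_dominated_convergence
      (fun n _ => cf n * (x ^ 4) ^ n)
    · intro n
      exact (by fun_prop : Continuous fun t : ℝ => cf n * (t ^ 4) ^ n).aestronglyMeasurable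
    · intro n
      filter_upwards with t ht
      rw [Set.uIoc_of_le h0.le] at ht
      have := cf_pos n
      have ht0 := ht.1
      have ht1 := ht.2
      rw [Real.norm_of_nonneg (by positivity)]
      gcongr
    · filter_upwards with t ht
      exact (cf_hasSum (by positivity) hx4).summable
    · simp
    · filter_upwards with t ht
      rw [Set.uIoc_of_le h0.le] at ht
      apply cf_hasSum
      · have := ht.1
        positivity
      · exact lt_of_le_of_lt (pow_le_pow_left₀ ht.1.le ht.2 4) hx4
  have := key.div_const x
  unfold arcsl
  refine hasSum_congr_aux this fun n => ?_
  rw [intervalIntegral.integral_const_mul]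
  simp only [← pow_mul, integral_pow]
  push_cast
  field_simp
  simp
  ring

lemma lerch_summable {y : ℝ} (h0 : 0 ≤ y) (h1 : y < 1) :
    Summable (fun k : ℕ => y ^ k / ((k : ℝ) + 1 / 4) ^ (3 / 2 : ℝ)) := by
  have hs := (summable_geometric_of_lt_one h0 h1).mul_right (1 / (1 / 4 : ℝ) ^ (3 / 2 : ℝ))
  refine Summable.of_nonneg_of_le (fun k => by positivity) (fun k => ?_) hs
  rw [mul_one_div]
  gcongr
  simp

/-- The ratio of coefficients. -/
noncomputable def rt (n : ℕ) : ℝ := cf n * Real.sqrt (n + 1 / 4) / 4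

lemma rt_strictMono : StrictMono rt := by
  apply strictMono_nat_of_lt_succ
  intro n
  unfold rt
  have hp := cf_pos n
  have hp' := cf_pos (n + 1)
  have hs := cf_succ n
  gcongr 1
  apply lt_of_pow_lt_pow_left₀ 2 (by positivity)
  rw [mul_pow, mul_pow, Real.sq_sqrt (by positivity), Real.sq_sqrt (by positivity)]
  have he : cf (n + 1) = cf n * (n + 1 / 2) / (n + 1) := by
    rw [← hs]; field_simp
  rw [he, div_pow, mul_pow, div_mul_eq_mul_div, lt_div_iff₀ (by positivity), mul_assoc, mul_assoc]
  push_cast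
  refine mul_lt_mul_of_pos_left ?_ (by positivity)
  have hn : (0 : ℝ) ≤ n := by positivity
  nlinarith

lemma coef_eq (n : ℕ) (y : ℝ) :
    cf n / (4 * n + 1) * y ^ n = rt n * (y ^ n / ((n : ℝ) + 1 / 4) ^ (3 / 2 : ℝ)) := by
  have h : ((n : ℝ) + 1 / 4) ^ (3 / 2 : ℝ) = ((n : ℝ) + 1 / 4) * Real.sqrt (n + 1 / 4) := by
    rw [Real.sqrt_eq_rpow, ← Real.rpow_one_add' (by positivity) (by norm_num)]
    norm_num
  have hsq : 0 < Real.sqrt ((n : ℝ) + 1 / 4) := by positivity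
  rw [h, rt]
  generalize Real.sqrt ((n : ℝ) + 1 / 4) = s at *
  have : (n : ℝ) + 1 / 4 ≠ 0 := by positivity
  field_simp

lemma ratio_lt {r b : ℕ → ℝ} (hr : StrictMono r) (hb : ∀ n, 0 < b n) {y z A B A' B' : ℝ}
    (hy : 0 < y) (hyz : y < z)
    (hA : HasSum (fun n => r n * (b n * y ^ n)) A) (hB : HasSum (fun n => b n * y ^ n) B)
    (hA' : HasSum (fun n => r n * (b n * z ^ n)) A') (hB' : HasSum (fun n => b n * z ^ n) B') :
    A / B < A' / B' := by
  have hz := hy.trans hyz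
  have hBp : 0 < B := by
    rw [← hB.tsum_eq]
    exact hB.summable.tsum_pos (fun n => by have := hb n; positivity) 0
      (by have := hb 0; positivity)
  have hBp' : 0 < B' := by
    rw [← hB'.tsum_eq]
    exact hB'.summable.tsum_pos (fun n => by have := hb n; positivity) 0
      (by have := hb 0; positivity)
  set c := A / B with hc
  have h0 : HasSum (fun n => (r n - c) * (b n * y ^ n)) 0 := by
    have := hA.sub (hB.mul_left c)
    rw [hc, div_mul_cancel₀ _ hBp.ne', sub_self] at this
    simpa only [sub_mul] using this
  have h1 : HasSum (fun n => (r n - c) * (b n * z ^ n)) (A' - c * B') := by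
    simpa only [sub_mul] using hA'.sub (hB'.mul_left c)
  rw [lt_div_iff₀ hBp', ← sub_pos]
  have hex : ∃ n, c < r n := by
    by_contra! hcon
    have hneg : ∀ n, r n - c < 0 := fun n => by
      have := hcon (n + 1)
      have := hr (Nat.lt_succ_self n)
      simp only [Nat.succ_eq_add_one] at this
      linarith
    have : 0 < ∑' n, -((r n - c) * (b n * y ^ n)) := by
      refine h0.summable.neg.tsum_pos (fun n => ?_) 0 ?_
      · have := hb n; have h3 := hneg n
        rw [← neg_mul]
        exact mul_nonneg (by linarith) (by positivity)
      · have := hb 0; have h3 := hneg 0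
        rw [← neg_mul]
        exact mul_pos (by linarith) (by positivity)
    rw [h0.neg.tsum_eq] at this
    simp at this
  classical
  let N := Nat.find hex
  have hN : c < r N := Nat.find_spec hex
  have hlt : ∀ m < N, r m ≤ c := fun m hm => not_lt.mp (Nat.find_min hex hm)
  have hq : 1 < z / y := (one_lt_div hy).2 hyz
  have h2 := h1.sub (h0.mul_left ((z / y) ^ N))
  rw [mul_zero, sub_zero] at h2
  have hterm : ∀ n, (r n - c) * (b n * z ^ n) - (z / y) ^ N * ((r n - c) * (b n * y ^ n)) =
      (b n * y ^ n) * ((r n - c) * ((z / y) ^ n - (z / y) ^ N)) := fun n => by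
    have : z ^ n = (z / y) ^ n * y ^ n := by rw [div_pow]; field_simp
    rw [this]; ring
  simp only [hterm] at h2
  rw [← h2.tsum_eq]
  refine h2.summable.tsum_pos (fun n => ?_) (N + 1) ?_
  · have := hb n
    refine mul_nonneg (by positivity) ?_
    rcases lt_or_ge n N with h | h
    · exact mul_nonneg_of_nonpos_of_nonpos (sub_nonpos.2 (hlt n h))
        (sub_nonpos.2 (pow_le_pow_right₀ hq.le h.le))
    · exact mul_nonneg (sub_nonneg.2 (hN.le.trans (hr.monotone h)))
        (sub_nonneg.2 (pow_le_pow_right₀ hq.le h))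
  · have := hb (N + 1)
    refine mul_pos (by positivity) (mul_pos (sub_pos.2 (hN.trans (hr (Nat.lt_succ_self N))))
      (sub_pos.2 (pow_lt_pow_right₀ hq (Nat.lt_succ_self N))))

theorem strictMonoOn_ratio :
    StrictMonoOn (fun x : ℝ => arcsl x / (x * lerchPhi (x ^ 4) (3 / 2) (1 / 4)))
      (Set.Ioo (0 : ℝ) 1) := by
  have hB : ∀ x ∈ Set.Ioo (0 : ℝ) 1,
      HasSum (fun k : ℕ => 1 / ((k : ℝ) + 1 / 4) ^ (3 / 2 : ℝ) * (x ^ 4) ^ k)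
        (lerchPhi (x ^ 4) (3 / 2) (1 / 4)) := fun x hx => by
    have := (lerch_summable (y := x ^ 4) (by positivity)
      (pow_lt_one₀ hx.1.le hx.2 (by norm_num))).hasSum
    simpa only [one_div_mul_eq_div, lerchPhi] using this
  have hA : ∀ x ∈ Set.Ioo (0 : ℝ) 1,
      HasSum (fun k : ℕ => rt k * (1 / ((k : ℝ) + 1 / 4) ^ (3 / 2 : ℝ) * (x ^ 4) ^ k))
        (arcsl x / x) := fun x hx => by
    have := arcsl_hasSum hx.1 hx.2
    simpa only [one_div_mul_eq_div, coef_eq] using this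
  intro x hx y hy hxy
  simp only [← div_div]
  exact ratio_lt rt_strictMono (fun n => by positivity) (pow_pos hx.1 4)
    (pow_lt_pow_left₀ hxy hx.1.le (by norm_num)) (hA x hx) (hB x hx) (hA y hy) (hB y hy)
end

section
/- The constant β = arcsl(1)/Φ(1, 3/2, 1/4) satisfies 1/8 < β < 1/7. -/
open Real in
lemma aux_deriv (a b t : ℝ) (h0 : 0 < t) (h1 : t < 1) :
    HasDerivAt (fun t => (a - b / 2) * arcsin t + b / 2 * (t * √(1 - t ^ 2)))
      ((a - b * t ^ 2) / √(1 - t ^ 2)) t := by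
  have hp : 0 < 1 - t ^ 2 := by nlinarith
  have hs : 0 < √(1 - t ^ 2) := Real.sqrt_pos.mpr hp
  have e : √(1 - t ^ 2) ^ 2 = 1 - t ^ 2 := Real.sq_sqrt hp.le
  have d1 := (Real.hasDerivAt_arcsin (x := t) (by linarith) h1.ne).const_mul (a - b / 2)
  have d2 : HasDerivAt (fun t : ℝ => 1 - t ^ 2) (-(2 * t)) t := by
    simpa using ((hasDerivAt_id t).pow 2).const_sub 1
  have d3 := ((hasDerivAt_id t).mul (d2.sqrt hp.ne')).const_mul (b / 2)
  refine (d1.add d3).congr_deriv ?_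
  simp only [id]
  field_simp
  rw [e]
  ring

open Real in
lemma aux_int (a b : ℝ) (h : ∀ t : ℝ, 0 < t → t < 1 → 0 ≤ a - b * t ^ 2) :
    IntervalIntegrable (fun t : ℝ => (a - b * t ^ 2) / √(1 - t ^ 2)) MeasureTheory.volume 0 1 ∧
    ∫ t in (0:ℝ)..1, (a - b * t ^ 2) / √(1 - t ^ 2) = (a - b / 2) * (π / 2) := by
  have hc : ContinuousOn (fun t => (a - b / 2) * arcsin t + b / 2 * (t * √(1 - t ^ 2)))
      (Set.Icc 0 1) := by
    apply Continuous.continuousOn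
    have := Real.continuous_arcsin
    fun_prop
  have hi : IntervalIntegrable (fun t : ℝ => (a - b * t ^ 2) / √(1 - t ^ 2))
      MeasureTheory.volume 0 1 := by
    rw [intervalIntegrable_iff_integrableOn_Ioc_of_le zero_le_one]
    refine intervalIntegral.integrableOn_deriv_of_nonneg hc
      (fun t ht => aux_deriv a b t ht.1 ht.2) ?_
    intro t ht
    exact div_nonneg (h t ht.1 ht.2) (Real.sqrt_nonneg _)
  refine ⟨hi, ?_⟩
  rw [intervalIntegral.integral_eq_sub_of_hasDerivAt_of_le zero_le_one hc
      (fun t ht => aux_deriv a b t ht.1 ht.2) hi]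
  simp

lemma aux_sqrt (t : ℝ) : √(1 - t ^ 4) = √(1 + t ^ 2) * √(1 - t ^ 2) := by
  rw [← Real.sqrt_mul (by positivity)]
  congr 1
  ring

lemma aux_lo (t : ℝ) (h0 : 0 < t) (h1 : t < 1) :
    (0.952 - 0.272 * t ^ 2) / √(1 - t ^ 2) ≤ 1 / √(1 - t ^ 4) := by
  have hs : 0 < √(1 - t ^ 2) := Real.sqrt_pos.mpr (by nlinarith)
  have hr : 0 < √(1 + t ^ 2) := Real.sqrt_pos.mpr (by positivity)
  rw [aux_sqrt, ← div_div]
  gcongr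
  rw [le_div_iff₀ hr]
  have e : √(1 + t ^ 2) ^ 2 = 1 + t ^ 2 := Real.sq_sqrt (by positivity)
  set r := √(1 + t ^ 2)
  have ht : t ^ 2 = r ^ 2 - 1 := by linarith
  rw [ht]
  nlinarith [mul_nonneg hr.le (sq_nonneg (r - 1.2247)), sq_nonneg (r - 1.2247)]

lemma aux_hi (t : ℝ) (h0 : 0 < t) (h1 : t < 1) :
    1 / √(1 - t ^ 4) ≤ (1 - 0.29 * t ^ 2) / √(1 - t ^ 2) := by
  have hs : 0 < √(1 - t ^ 2) := Real.sqrt_pos.mpr (by nlinarith)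
  have hr : 0 < √(1 + t ^ 2) := Real.sqrt_pos.mpr (by positivity)
  rw [aux_sqrt, ← div_div]
  gcongr
  rw [div_le_iff₀ hr]
  have e : √(1 + t ^ 2) ^ 2 = 1 + t ^ 2 := Real.sq_sqrt (by positivity)
  have hr1 : 1 ≤ √(1 + t ^ 2) := Real.one_le_sqrt.mpr (by nlinarith)
  have hr2 : √(1 + t ^ 2) ≤ 1.4143 := by
    rw [Real.sqrt_le_left (by norm_num)]
    nlinarith
  set r := √(1 + t ^ 2)
  have ht : t ^ 2 = r ^ 2 - 1 := by linarith
  rw [ht]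
  have : 0 ≤ (r - 1) * (1 - 0.29 * (r ^ 2 + r)) := by
    apply mul_nonneg (by linarith)
    nlinarith
  nlinarith

lemma arcsl_bounds : 1.2817 < arcsl 1 ∧ arcsl 1 < 1.3431 := by
  obtain ⟨i1, e1⟩ := aux_int 0.952 0.272 (fun t h0 h1 => by nlinarith)
  obtain ⟨i2, e2⟩ := aux_int 1 0.29 (fun t h0 h1 => by nlinarith)
  have hf : IntervalIntegrable (fun t : ℝ => 1 / √(1 - t ^ 4)) MeasureTheory.volume 0 1 := by
    rw [intervalIntegrable_iff_integrableOn_Ioo_of_le zero_le_one] at i2 ⊢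
    refine MeasureTheory.Integrable.mono' i2 (Measurable.aestronglyMeasurable (by fun_prop)) ?_
    filter_upwards [MeasureTheory.ae_restrict_mem measurableSet_Ioo] with t ht
    rw [Real.norm_of_nonneg (by positivity)]
    exact aux_hi t ht.1 ht.2
  have l := intervalIntegral.integral_mono_on_of_le_Ioo zero_le_one i1 hf
    (fun t ht => aux_lo t ht.1 ht.2)
  have u := intervalIntegral.integral_mono_on_of_le_Ioo zero_le_one hf i2
    (fun t ht => aux_hi t ht.1 ht.2)
  rw [e1] at l
  rw [e2] at u
  have p1 := Real.pi_gt_d4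
  have p2 := Real.pi_lt_d4
  unfold arcsl
  constructor <;> linarith

lemma aux_rpow (x : ℝ) (hx : 0 < x) : x ^ (3 / 2 : ℝ) = x * √x := by
  rw [show (3 / 2 : ℝ) = 1 + 1 / 2 by norm_num, Real.rpow_add hx, Real.rpow_one,
    Real.sqrt_eq_rpow]

lemma aux_tele (x : ℝ) (hx : 1 / 2 < x) :
    1 / (x * √x) ≤ 2 / √(x - 1 / 2) - 2 / √(x + 1 / 2) := by
  have hp : 0 < √(x - 1 / 2) := Real.sqrt_pos.mpr (by linarith)
  have hq : 0 < √(x + 1 / 2) := Real.sqrt_pos.mpr (by linarith)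
  have hs : 0 < √x := Real.sqrt_pos.mpr (by linarith)
  have ep : √(x - 1 / 2) ^ 2 = x - 1 / 2 := Real.sq_sqrt (by linarith)
  have eq : √(x + 1 / 2) ^ 2 = x + 1 / 2 := Real.sq_sqrt (by linarith)
  have es : √x ^ 2 = x := Real.sq_sqrt (by linarith)
  set p := √(x - 1 / 2)
  set q := √(x + 1 / 2)
  set s := √x
  have h1 : p * q ≤ x := by nlinarith [sq_nonneg (p - q)]
  have h2 : p + q ≤ 2 * s := by
    refine (sq_le_sq₀ (by positivity) (by positivity)).mp ?_
    nlinarith [sq_nonneg (p - q)]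
  have h3 : p * q * (p + q) ≤ x * (2 * s) := by gcongr
  have h4 : 2 / p - 2 / q = 2 / (p * q * (p + q)) := by
    field_simp
    nlinarith
  rw [h4, div_le_div_iff₀ (by positivity) (by positivity)]
  linarith

lemma lerch_term (k : ℕ) :
    (1:ℝ) ^ k / ((k : ℝ) + 1 / 4) ^ (3 / 2 : ℝ) = 1 / (((k : ℝ) + 1 / 4) * √((k : ℝ) + 1 / 4)) := by
  rw [aux_rpow _ (by positivity), one_pow]

lemma aux_partial (n : ℕ) :
    ∑ k ∈ Finset.range n, 1 / ((((k + 2 : ℕ) : ℝ) + 1 / 4) * √(((k + 2 : ℕ) : ℝ) + 1 / 4))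
      ≤ 2 / √(7 / 4) - 2 / √((n : ℝ) + 7 / 4) := by
  induction n with
  | zero => simp
  | succ n ih =>
    rw [Finset.sum_range_succ]
    have := aux_tele (((n + 2 : ℕ) : ℝ) + 1 / 4) (by push_cast; linarith [n.cast_nonneg (α := ℝ)])
    have a1 : ((n + 2 : ℕ) : ℝ) + 1 / 4 - 1 / 2 = n + 7 / 4 := by push_cast; ring
    have a2 : ((n + 2 : ℕ) : ℝ) + 1 / 4 + 1 / 2 = (n + 1 : ℕ) + 7 / 4 := by push_cast; ring
    rw [a1, a2] at this
    linarith

lemma aux_termlo (x c : ℝ) (hx : 0 < x) (hc : 0 < c) (h : x ≤ c ^ 2) :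
    1 / (x * c) ≤ 1 / (x * √x) := by
  have hs : 0 < √x := Real.sqrt_pos.mpr hx
  have : √x ≤ c := by rw [Real.sqrt_le_left hc.le]; exact h
  gcongr

lemma lerch_bounds :
    9.42 < lerchPhi 1 (3 / 2) (1 / 4) ∧ lerchPhi 1 (3 / 2) (1 / 4) < 10.25 := by
  unfold lerchPhi
  simp_rw [lerch_term]
  set f : ℕ → ℝ := fun k => 1 / (((k : ℝ) + 1 / 4) * √((k : ℝ) + 1 / 4)) with hf
  have hnn : ∀ k, 0 ≤ f k := fun k => by simp only [hf]; positivity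
  have hle : ∀ n, ∑ k ∈ Finset.range n, f (k + 2) ≤ 2 / √(7 / 4) := fun n => by
    have := aux_partial n
    have h2 : 0 ≤ 2 / √((n : ℝ) + 7 / 4) := by positivity
    simp only [hf]
    linarith
  have hs2 : Summable (fun k => f (k + 2)) := summable_of_sum_range_le (fun k => hnn _) hle
  have hs : Summable f := (summable_nat_add_iff 2).mp hs2
  have ht : ∑' k, f (k + 2) ≤ 2 / √(7 / 4) := Real.tsum_le_of_sum_range_le (fun k => hnn _) hle
  have f0 : f 0 = 8 := by
    have : √(1 / 4 : ℝ) = 1 / 2 := by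
      rw [Real.sqrt_eq_iff_mul_self_eq (by norm_num) (by norm_num)]; norm_num
    simp only [hf, Nat.cast_zero, zero_add, this]
    norm_num
  constructor
  · refine lt_of_lt_of_le ?_ (hs.sum_le_tsum (Finset.range 7) (fun k _ => hnn k))
    simp only [Finset.sum_range_succ, Finset.sum_range_zero, f0]
    have t1 := aux_termlo (((1:ℕ) : ℝ) + 1 / 4) 1.119 (by norm_num) (by norm_num) (by norm_num)
    have t2 := aux_termlo (((2:ℕ) : ℝ) + 1 / 4) 1.5 (by norm_num) (by norm_num) (by norm_num)
    have t3 := aux_termlo (((3:ℕ) : ℝ) + 1 / 4) 1.803 (by norm_num) (by norm_num) (by norm_num)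
    have t4 := aux_termlo (((4:ℕ) : ℝ) + 1 / 4) 2.062 (by norm_num) (by norm_num) (by norm_num)
    have t5 := aux_termlo (((5:ℕ) : ℝ) + 1 / 4) 2.292 (by norm_num) (by norm_num) (by norm_num)
    have t6 := aux_termlo (((6:ℕ) : ℝ) + 1 / 4) 2.5 (by norm_num) (by norm_num) (by norm_num)
    refine lt_of_lt_of_le ?_ (add_le_add (add_le_add (add_le_add (add_le_add (add_le_add
      (add_le_add le_rfl t1) t2) t3) t4) t5) t6)
    norm_num
  · rw [← hs.sum_add_tsum_nat_add 2]
    simp only [Finset.sum_range_succ, Finset.sum_range_zero, f0]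
    have g1 : f 1 ≤ 0.7165 := by
      have : (1.118 : ℝ) ≤ √(((1:ℕ) : ℝ) + 1 / 4) := Real.le_sqrt_of_sq_le (by norm_num)
      simp only [hf]
      rw [div_le_iff₀ (by positivity)]
      norm_num at this ⊢
      linarith
    have g2 : 2 / √(7 / 4) ≤ (1.5130 : ℝ) := by
      have : (1.322 : ℝ) ≤ √(7 / 4) := Real.le_sqrt_of_sq_le (by norm_num)
      rw [div_le_iff₀ (by positivity)]
      linarith
    linarith

theorem beta_between :
    1 / 8 < arcsl 1 / lerchPhi 1 (3 / 2) (1 / 4) ∧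
      arcsl 1 / lerchPhi 1 (3 / 2) (1 / 4) < 1 / 7 := by
  obtain ⟨a1, a2⟩ := arcsl_bounds
  obtain ⟨l1, l2⟩ := lerch_bounds
  have hp : 0 < lerchPhi 1 (3 / 2) (1 / 4) := by linarith
  constructor
  · rw [lt_div_iff₀ hp]; linarith
  · rw [div_lt_iff₀ hp]; linarith
end
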